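/- For every d with 0 < d < 1 there exist ε > 0 and an integer n₀ such that every (ε, d)-super-regular digraph on n ≥ n₀ vertices contains a Hamilton cycle. -/

import Mathlib

/-- The outdegree of a vertex `x` in the digraph with adjacency relation `G`. -/
noncomputable def outDeg {V : Type*} (G : V → V → Prop) (x : V) : ℕ :=
  Nat.card {y : V // G x y}

/-- The indegree of a vertex `x` in the digraph with adjacency relation `G`. -/
noncomputable def inDeg {V : Type*} (G : V → V → Prop) (x : V) : ℕ :=
  Nat.card {y : V // G y x}

/-- `f` is a Hamilton cycle of the digraph `G`. -/
def IsHamCycle {V : Type*} [Fintype V] (G : V → V → Prop)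
    (f : ZMod (Fintype.card V) → V) : Prop :=
  Function.Bijective f ∧ ∀ i, G (f i) (f (i + 1))

/-- The number of edges of `G` directed from `X` to `Y`. -/
noncomputable def eCount {V : Type*} (G : V → V → Prop) (X Y : Set V) : ℕ :=
  Nat.card {p : V × V // p.1 ∈ X ∧ p.2 ∈ Y ∧ G p.1 p.2}

/-- The density of the pair `(X, Y)` in `G`. -/
noncomputable def dens {V : Type*} (G : V → V → Prop) (X Y : Set V) : ℝ :=
  (eCount G X Y : ℝ) / ((X.ncard : ℝ) * (Y.ncard : ℝ))

/-- `G` is (ε, d)-super-regular: it is ε-regular (w.r.t. its global density), and every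
vertex has outdegree and indegree at least d·n. -/
def SuperRegular {V : Type*} [Fintype V] (G : V → V → Prop) (ε d : ℝ) : Prop :=
  (∀ X Y : Set V, ε * (Fintype.card V : ℝ) ≤ (X.ncard : ℝ) →
    ε * (Fintype.card V : ℝ) ≤ (Y.ncard : ℝ) →
    |dens G X Y - dens G Set.univ Set.univ| < ε) ∧
  ∀ x : V, d * (Fintype.card V : ℝ) ≤ (outDeg G x : ℝ) ∧
    d * (Fintype.card V : ℝ) ≤ (inDeg G x : ℝ)

/-!
In a super-regular digraph there are `r` and `q`, smaller than all degrees by suitable constant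
factors, such that among any `r` vertices one has more than `r` out-neighbours in any given set of
`q` vertices. A longest path `P`, say from `s` to `z`, contains all in-neighbours of `s` and all
out-neighbours of `z`. If `P = … u x … y w … z` with edges `u → w` and `z → x`, then `… u w … z x …
y` is a path on the same vertices which ends in `y`. Hence `P` can be closed up as soon as `z` has
many out-neighbours in an initial segment of `P` and `s` has many in-neighbours in the rest:
expansion yields `u → w` with `y → s`.

Cut `P` after its first `q` vertices. If `z` has few out-neighbours in the initial segment, it has
many in the rest; rotations inside the rest then produce many possible new endpoints, and expansion
provides one with more than `r` out-neighbours in the initial segment, so that the new path can be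
closed up. The resulting cycle is as long as a longest path, so no edge enters it from outside,
whereas expansion provides such an edge unless the cycle is spanning.
-/

/-- A directed path of the digraph `G`, given by the list of its vertices in order; the empty list
is allowed. -/
structure IsDiPath {V : Type*} (G : V → V → Prop) (l : List V) : Prop where
  nodup : l.Nodup
  isChain : l.IsChain G

/-- The one-sided expansion of a digraph that super-regularity provides: among any `r` vertices, one
has more than `r` out-neighbours in any prescribed set of at least `q` vertices. -/
def Expanding {V : Type*} (G : V → V → Prop) [DecidableRel G] (r q : ℕ) : Prop :=
  ∀ X Y : Finset V, r ≤ X.card → q ≤ Y.card → ∃ x ∈ X, r < (Y.filter (G x)).card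

section Lists

variable {α : Type*}

lemma exists_append_countP_eq {p : α → Bool} {l : List α} {k : ℕ} (hk : k ≤ l.countP p) :
    ∃ l₁ l₂, l = l₁ ++ l₂ ∧ l₁.countP p = k := by
  induction l generalizing k with
  | nil => exact ⟨[], [], rfl, by simp_all⟩
  | cons a l ih =>
    rcases k.eq_zero_or_pos with rfl | hk0
    · exact ⟨[], a :: l, rfl, rfl⟩
    obtain ⟨l₁, l₂, rfl, h⟩ := ih (k := k - if p a then 1 else 0) (by grind)
    exact ⟨a :: l₁, l₂, rfl, by grind⟩

lemma exists_sublist_predecessors (p : α → Bool) (l : List α) :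
    ∃ m : List α, m.Sublist l ∧ l.countP p ≤ m.length + 1 ∧
      ∀ u ∈ m, ∃ s x t, l = s ++ u :: x :: t ∧ p x := by
  suffices h : ∀ l a, ∃ m : List α, m.Sublist (a :: l) ∧ l.countP p ≤ m.length ∧
      ∀ u ∈ m, ∃ s x t, a :: l = s ++ u :: x :: t ∧ p x by
    cases l with
    | nil => exact ⟨[], by simp⟩
    | cons a l =>
      obtain ⟨m, hml, hcard, hm⟩ := h l a
      exact ⟨m, hml, by grind, hm⟩
  intro l
  induction l with
  | nil => exact fun a => ⟨[], by simp⟩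
  | cons b l ih =>
    intro a
    obtain ⟨m, hml, hcard, hm⟩ := ih b
    have hm' : ∀ u ∈ m, ∃ s x t, a :: b :: l = s ++ u :: x :: t ∧ p x := fun u hu => by
      obtain ⟨s, x, t, hl, hx⟩ := hm u hu
      exact ⟨a :: s, x, t, by simp [hl], hx⟩
    by_cases hb : p b
    · refine ⟨a :: m, hml.cons_cons a, by simpa [hb] using hcard, fun u hu => ?_⟩
      rcases List.mem_cons.1 hu with rfl | hu
      exacts [⟨[], b, l, rfl, hb⟩, hm' u hu]
    · exact ⟨m, hml.cons a, by simpa [hb] using hcard, hm'⟩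

lemma exists_sublist_successors (p : α → Bool) (l : List α) :
    ∃ m : List α, m.Sublist l ∧ l.countP p ≤ m.length + 1 ∧
      ∀ w ∈ m, ∃ s y t, l = s ++ y :: w :: t ∧ p y := by
  obtain ⟨m, hml, hcard, hm⟩ := exists_sublist_predecessors p l.reverse
  refine ⟨m.reverse, ?_, ?_, fun w hw => ?_⟩
  · simpa using hml.reverse
  · simpa using hcard
  · obtain ⟨s, y, t, hl, hy⟩ := hm w (List.mem_reverse.1 hw)
    exact ⟨t.reverse, y, s.reverse, by simpa using congrArg List.reverse hl, hy⟩

lemma card_filter_univ_le_countP [Fintype α] {p : α → Prop} [DecidablePred p] {l : List α}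
    (hp : ∀ x, p x → x ∈ l) : (Finset.univ.filter p).card ≤ l.countP p := by
  classical
  calc (Finset.univ.filter p).card ≤ (l.filter p).toFinset.card :=
        Finset.card_le_card fun x hx => by simp_all
    _ ≤ (l.filter p).length := List.toFinset_card_le _
    _ = l.countP p := List.countP_eq_length_filter.symm

end Lists

section Paths

variable {V : Type*} {G : V → V → Prop}

lemma IsDiPath.swap {s m t : List V} {u x w z : V} (h : IsDiPath G (s ++ u :: (x :: m ++ w :: t)))
    (huw : G u w) (hz : z ∈ (w :: t).getLast?) (hzx : G z x) :
    IsDiPath G (s ++ u :: (w :: t ++ x :: m)) := by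
  refine ⟨((List.perm_append_comm.cons u).append_left s).nodup_iff.1 h.nodup, ?_⟩
  have hchain := h.isChain
  simp only [List.cons_append, List.isChain_append_cons_cons] at hchain ⊢
  obtain ⟨hsu, -, hxt⟩ := hchain
  refine ⟨hsu, huw, ?_⟩
  rw [← List.cons_append, List.isChain_append] at hxt ⊢
  exact ⟨hxt.2.1, hxt.1, by grind⟩

lemma IsDiPath.replace_suffix {a b b' : List V} (h : IsDiPath G (a ++ b)) (hb' : IsDiPath G b')
    (hperm : b'.Perm b) (hhead : b'.head? = b.head?) : IsDiPath G (a ++ b') := by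
  refine ⟨(hperm.append_left a).nodup_iff.2 h.nodup, ?_⟩
  obtain ⟨ha, -, hab⟩ := List.isChain_append.1 h.isChain
  exact List.isChain_append.2 ⟨ha, hb'.isChain, hhead ▸ hab⟩

lemma exists_isDiPath_length_eq_succ {c : List V} (hc : c.Nodup) (hG : (c : Cycle V).Chain G)
    {x y : V} (hx : x ∉ c) (hy : y ∈ c) (hxy : G x y) :
    ∃ l, IsDiPath G l ∧ l.length = c.length + 1 := by
  obtain ⟨s, t, rfl⟩ := List.append_of_mem hy
  have hrot : (s ++ y :: t).IsRotated (y :: (t ++ s)) := List.isRotated_append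
  rw [Cycle.coe_eq_coe.2 hrot, Cycle.chain_coe_cons] at hG
  refine ⟨x :: y :: (t ++ s), ⟨?_, ?_⟩, by simp [hrot.perm.length_eq]⟩
  · exact List.nodup_cons.2 ⟨mt hrot.mem_iff.2 hx, hrot.nodup_iff.1 hc⟩
  · exact List.isChain_cons_cons.2 ⟨hxy, hG.prefix ⟨[y], rfl⟩⟩

lemma IsDiPath.chain_coe {l : List V} (h : IsDiPath G l) {s z : V} (hs : s ∈ l.head?)
    (hz : z ∈ l.getLast?) (hzs : G z s) : (l : Cycle V).Chain G := by
  obtain ⟨t, rfl⟩ := List.head?_eq_some_iff.1 hs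
  refine (Cycle.chain_ne_nil G (List.cons_ne_nil s t)).2 (List.isChain_cons_cons.2 ⟨?_, h.isChain⟩)
  rwa [(List.getLast_eq_iff_getLast?_eq_some _).2 hz]

lemma exists_maximalFor_isDiPath_length [Finite V] (G : V → V → Prop) :
    ∃ l, MaximalFor (IsDiPath G) List.length l := by
  have := Fintype.ofFinite V
  have hfin : {l | IsDiPath G l}.Finite :=
    (List.finite_length_le V (Fintype.card V)).subset fun _ h => h.nodup.length_le_card
  exact hfin.exists_maximalFor List.length _ ⟨[], List.nodup_nil, List.isChain_nil⟩

lemma mem_of_getLast_adj_of_maximalFor {l : List V} (h : MaximalFor (IsDiPath G) List.length l)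
    {x z : V} (hz : z ∈ l.getLast?) (hzx : G z x) : x ∈ l := by
  by_contra hx
  have hl : IsDiPath G (l ++ [x]) :=
    ⟨by grind [h.prop.nodup], List.isChain_append.2 ⟨h.prop.isChain, by grind⟩⟩
  simpa using h.2 hl (by simp)

lemma mem_of_adj_head_of_maximalFor {l : List V} (h : MaximalFor (IsDiPath G) List.length l)
    {x s : V} (hs : s ∈ l.head?) (hxs : G x s) : x ∈ l := by
  by_contra hx
  have hl : IsDiPath G (x :: l) :=
    ⟨List.nodup_cons.2 ⟨hx, h.prop.nodup⟩, List.isChain_cons.2 ⟨by simp_all, h.prop.isChain⟩⟩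
  simpa using h.2 hl (by simp)

lemma adj_getElem_succ_mod {l : List V} (h : (l : Cycle V).Chain G) {i : ℕ} (hi : i < l.length) :
    G l[i] (l[(i + 1) % l.length]'(Nat.mod_lt _ (Nat.zero_lt_of_lt hi))) := by
  obtain ⟨a, t, rfl⟩ := List.exists_cons_of_length_pos (Nat.zero_lt_of_lt hi)
  have hchain : ((a :: t) ++ [a]).IsChain G := (Cycle.chain_coe_cons ..).1 h
  have hadj := List.isChain_iff_getElem.1 hchain i (by simpa using hi)
  rw [List.getElem_append_left hi] at hadj
  rcases (Nat.succ_le_of_lt hi).eq_or_lt with hlast | hlt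
  · obtain rfl : i = t.length := by simpa using hlast
    simpa using hadj
  · simpa only [Nat.mod_eq_of_lt hlt, List.getElem_append_left hlt] using hadj

lemma exists_isHamCycle_of_chain [Fintype V] [Nonempty V] {l : List V} (hl : l.Nodup)
    (hG : (l : Cycle V).Chain G) (hmem : ∀ x, x ∈ l) :
    ∃ f : ZMod (Fintype.card V) → V, IsHamCycle G f := by
  classical
  have hcard : Fintype.card V = l.length := by
    simpa using (Fintype.card_of_bijective (hl.getBijectionOfForallMemList l hmem).2).symm
  have hlt (i : ZMod (Fintype.card V)) : i.val < l.length := hcard ▸ ZMod.val_lt i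
  refine ⟨fun i => l[i.val]'(hlt i), ?_, fun i => ?_⟩
  · refine (Fintype.bijective_iff_injective_and_card _).2 ⟨fun i j hij => ?_, ZMod.card _⟩
    exact ZMod.val_injective _ (hl.getElem_inj_iff.1 hij)
  · have hval : (i + 1).val = (i.val + 1) % l.length := by
      rw [ZMod.val_add, ZMod.val_one_eq_one_mod, Nat.add_mod_mod, ← hcard]
    simpa only [hval] using adj_getElem_succ_mod hG (hlt i)

end Paths

namespace Expanding

variable {V : Type*} {G : V → V → Prop} [DecidableRel G] {r q : ℕ}

lemma exists_lt_countP (hG : Expanding G r q) {l₁ l₂ : List V} (h₁ : l₁.Nodup) (h₂ : l₂.Nodup)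
    (hr : r ≤ l₁.length) (hq : q ≤ l₂.length) : ∃ x ∈ l₁, r < l₂.countP (G x) := by
  classical
  obtain ⟨x, hx, hlt⟩ := hG l₁.toFinset l₂.toFinset
    (by rwa [List.toFinset_card_of_nodup h₁]) (by rwa [List.toFinset_card_of_nodup h₂])
  refine ⟨x, List.mem_toFinset.1 hx, ?_⟩
  have hfilter : l₂.toFinset.filter (G x) = (l₂.filter (G x)).toFinset := by ext; simp
  rwa [hfilter, List.toFinset_card_of_nodup (h₂.filter _),
    ← List.countP_eq_length_filter] at hlt

lemma exists_adj (hG : Expanding G r q) {l₁ l₂ : List V} (h₁ : l₁.Nodup) (h₂ : l₂.Nodup)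
    (hr : r ≤ l₁.length) (hq : q ≤ l₂.length) : ∃ x ∈ l₁, ∃ y ∈ l₂, G x y := by
  obtain ⟨x, hx, hlt⟩ := hG.exists_lt_countP h₁ h₂ hr hq
  obtain ⟨y, hy, hxy⟩ := List.countP_pos_iff.1 (Nat.zero_lt_of_lt hlt)
  exact ⟨x, hx, y, hy, by simpa using hxy⟩

lemma countP_countP_le_lt (hG : Expanding G r q) {l₁ l₂ : List V} (h₁ : l₁.Nodup) (h₂ : l₂.Nodup)
    (hq : q ≤ l₁.length) : l₂.countP (fun y => l₁.countP (G y) ≤ r) < r := by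
  by_contra! hr
  rw [List.countP_eq_length_filter] at hr
  obtain ⟨y, hy, hlt⟩ := hG.exists_lt_countP (h₂.filter _) h₁ hr hq
  exact hlt.not_ge (by simpa using (List.mem_filter.1 hy).2)

lemma exists_isDiPath_perm_getLast (hG : Expanding G r q) {l₁ l₂ : List V}
    (h : IsDiPath G (l₁ ++ l₂)) {z : V} (hz : z ∈ (l₁ ++ l₂).getLast?) (hr : r < l₁.countP (G z))
    {p : V → Bool} (hq : q < l₂.countP p) :
    ∃ l, IsDiPath G l ∧ l.Perm (l₁ ++ l₂) ∧ l.head? = (l₁ ++ l₂).head? ∧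
      ∃ y ∈ l.getLast?, p y := by
  obtain ⟨us, hus, hrus, hpred⟩ := exists_sublist_predecessors (G z) l₁
  obtain ⟨ws, hws, hqws, hsucc⟩ := exists_sublist_successors p l₂
  obtain ⟨h₁, h₂, -⟩ := List.nodup_append.1 h.nodup
  obtain ⟨u, hu, w, hw, huw⟩ := hG.exists_adj (h₁.sublist hus) (h₂.sublist hws)
    (by lia) (by lia)
  obtain ⟨s₁, x, t₁, rfl, hzx⟩ := hpred u hu
  obtain ⟨s₂, y, t₂, rfl, hy⟩ := hsucc w hw
  have hsplit : (s₁ ++ u :: x :: t₁) ++ (s₂ ++ y :: w :: t₂) =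
      s₁ ++ u :: (x :: (t₁ ++ s₂ ++ [y]) ++ w :: t₂) := by simp
  rw [hsplit] at h hz ⊢
  have hz' : z ∈ (w :: t₂).getLast? := by
    simpa [List.getLast?_append, List.getLast?_cons] using hz
  refine ⟨_, h.swap huw hz' (by simpa using hzx),
    (List.perm_append_comm.cons u).append_left s₁, by cases s₁ <;> rfl, y, ?_, hy⟩
  simp [List.getLast?_append, List.getLast?_cons]

lemma exists_cycle_of_lt_countP (hG : Expanding G r q) {l₁ l₂ : List V}
    (h : IsDiPath G (l₁ ++ l₂)) {s z : V} (hs : s ∈ (l₁ ++ l₂).head?)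
    (hz : z ∈ (l₁ ++ l₂).getLast?) (hr : r < l₁.countP (G z)) (hq : q < l₂.countP (G · s)) :
    ∃ c : List V, c.Nodup ∧ (c : Cycle V).Chain G ∧ c.length = (l₁ ++ l₂).length := by
  obtain ⟨l, hl, hperm, hhead, y, hy, hys⟩ := hG.exists_isDiPath_perm_getLast h hz hr hq
  exact ⟨l, hl.nodup, hl.chain_coe (hhead ▸ hs) hy (by simpa using hys), hperm.length_eq⟩

lemma exists_isDiPath_append_perm_getLast (hG : Expanding G r q) {l₁ l₂ : List V}
    (h : IsDiPath G (l₁ ++ l₂)) (hl₁ : q ≤ l₁.length) {z : V} (hz : z ∈ (l₁ ++ l₂).getLast?)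
    (hl₂ : q + 2 * r < l₂.countP (G z)) :
    ∃ l, l.Perm l₂ ∧ IsDiPath G (l₁ ++ l) ∧ (l₁ ++ l).head? = (l₁ ++ l₂).head? ∧
      ∃ y ∈ (l₁ ++ l).getLast?, r < l₁.countP (G y) := by
  obtain ⟨k₁, k₂, rfl, hk₁⟩ :=
    exists_append_countP_eq (p := (G z ·)) (l := l₂) (k := r + 1) (by lia)
  obtain ⟨hnd₁, hnd₂, -⟩ := List.nodup_append.1 h.nodup
  set p : V → Bool := fun y => r < l₁.countP (G y)
  have hfew : k₂.countP (fun y => ¬ p y) < r := by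
    simpa [p] using hG.countP_countP_le_lt hnd₁ (List.nodup_append.1 hnd₂).2.1 hl₁
  have hmany : q < k₂.countP p := by
    have hlen : k₂.length = k₂.countP p + k₂.countP (fun y => ¬ p y) :=
      k₂.length_eq_countP_add_countP p
    have hle : k₂.countP (G z) ≤ k₂.length := List.countP_le_length
    rw [List.countP_append] at hl₂
    lia
  have hz₂ : z ∈ (k₁ ++ k₂).getLast? := by
    rwa [List.getLast?_append_of_ne_nil _ (by grind)] at hz
  obtain ⟨l, hl, hperm, hhead, y, hy, hpy⟩ := hG.exists_isDiPath_perm_getLast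
    ⟨hnd₂, (List.isChain_append.1 h.isChain).2.1⟩ hz₂ (by lia) hmany
  exact ⟨l, hperm, h.replace_suffix hl hperm hhead,
    by rw [List.head?_append, hhead, ← List.head?_append],
    y, List.mem_getLast?_append_of_mem_getLast? hy, by simpa [p] using hpy⟩

lemma exists_cycle_length_eq (hG : Expanding G r q) {D : ℕ} (hqD : 2 * q < D)
    (hrD : q + 3 * r < D) {l : List V} (h : IsDiPath G l) {s z : V} (hs : s ∈ l.head?)
    (hz : z ∈ l.getLast?) (hin : D ≤ l.countP (G · s)) (hout : D ≤ l.countP (G z)) :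
    ∃ c : List V, c.Nodup ∧ (c : Cycle V).Chain G ∧ c.length = l.length := by
  have hql : q ≤ l.length := by linarith [l.countP_le_length (p := (G z ·))]
  obtain ⟨l₁, l₂, rfl, hl₁⟩ : ∃ l₁ l₂, l = l₁ ++ l₂ ∧ l₁.length = q :=
    ⟨_, _, (l.take_append_drop q).symm, by simpa⟩
  have hin₁ : l₁.countP (G · s) ≤ q := hl₁ ▸ List.countP_le_length
  rw [List.countP_append] at hin hout
  rcases lt_or_ge r (l₁.countP (G z)) with hlt | hle
  · exact hG.exists_cycle_of_lt_countP h hs hz hlt (by lia)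
  · obtain ⟨l, hperm, hl, hhead, y, hy, hlt⟩ :=
      hG.exists_isDiPath_append_perm_getLast h hl₁.ge hz (by lia)
    obtain ⟨c, hc, hcG, hlen⟩ := hG.exists_cycle_of_lt_countP (s := s) hl (hhead ▸ hs) hy hlt
      (by rw [hperm.countP_eq]; lia)
    exact ⟨c, hc, hcG, by rw [hlen, (hperm.append_left l₁).length_eq]⟩

lemma exists_adj_of_notMem [Fintype V] (hG : Expanding G r q)
    (hr : ∀ x, r ≤ (Finset.univ.filter (G x)).card) {S : Finset V} (hS : q ≤ S.card) {x : V}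
    (hx : x ∉ S) : ∃ y ∉ S, ∃ w ∈ S, G y w := by
  by_cases hxS : ∃ w ∈ S, G x w
  · exact ⟨x, hx, hxS⟩
  · push Not at hxS
    obtain ⟨y, hxy, hlt⟩ := hG _ S (hr x) hS
    obtain ⟨w, hw⟩ := Finset.card_pos.1 (Nat.zero_lt_of_lt hlt)
    obtain ⟨hwS, hyw⟩ := Finset.mem_filter.1 hw
    exact ⟨y, fun hyS => hxS y hyS (Finset.mem_filter.1 hxy).2, w, hwS, hyw⟩

lemma exists_isHamCycle [Fintype V] [Nonempty V] (hG : Expanding G r q) {D : ℕ} (hqD : 2 * q < D)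
    (hrD : q + 3 * r < D) (hout : ∀ x, D ≤ (Finset.univ.filter (G x)).card)
    (hin : ∀ x, D ≤ (Finset.univ.filter (G · x)).card) :
    ∃ f : ZMod (Fintype.card V) → V, IsHamCycle G f := by
  classical
  obtain ⟨l, hl⟩ := exists_maximalFor_isDiPath_length G
  have hne : l ≠ [] := by
    rintro rfl
    have hx : IsDiPath G [Classical.arbitrary V] :=
      ⟨List.nodup_singleton _, List.isChain_singleton _⟩
    simpa using hl.2 hx (by simp)
  have hs : l.head hne ∈ l.head? := List.head_mem_head? hne
  have hz : l.getLast hne ∈ l.getLast? := List.getLast_mem_getLast? hne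
  have hinl : D ≤ l.countP (G · (l.head hne)) := (hin _).trans <|
    card_filter_univ_le_countP fun _ => mem_of_adj_head_of_maximalFor hl hs
  have houtl : D ≤ l.countP (G (l.getLast hne)) := (hout _).trans <|
    card_filter_univ_le_countP fun _ => mem_of_getLast_adj_of_maximalFor hl hz
  obtain ⟨c, hc, hcG, hlen⟩ := hG.exists_cycle_length_eq hqD hrD hl.prop hs hz hinl houtl
  refine exists_isHamCycle_of_chain hc hcG fun x => ?_
  by_contra hx
  have hqc : q ≤ c.toFinset.card := by
    rw [List.toFinset_card_of_nodup hc, hlen]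
    linarith [l.countP_le_length (p := (G (l.getLast hne) ·))]
  obtain ⟨y, hy, w, hw, hyw⟩ := hG.exists_adj_of_notMem (fun x => by linarith [hout x]) hqc
    (List.mem_toFinset.not.2 hx)
  obtain ⟨l', hl', hlen'⟩ := exists_isDiPath_length_eq_succ hc hcG (List.mem_toFinset.not.1 hy)
    (List.mem_toFinset.1 hw) hyw
  linarith [hl.2 hl' (by lia)]

end Expanding

section Density

variable {V : Type*} {G : V → V → Prop}

lemma outDeg_eq_card_filter [Fintype V] [DecidableRel G] (x : V) :
    outDeg G x = (Finset.univ.filter (G x)).card := by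
  rw [outDeg, Nat.card_eq_fintype_card, Fintype.card_subtype]

lemma inDeg_eq_card_filter [Fintype V] [DecidableRel G] (x : V) :
    inDeg G x = (Finset.univ.filter (G · x)).card := by
  rw [inDeg, Nat.card_eq_fintype_card, Fintype.card_subtype]

lemma eCount_eq_sum [DecidableRel G] (X Y : Finset V) :
    eCount G X Y = ∑ x ∈ X, (Y.filter (G x)).card := by
  rw [eCount, Nat.subtype_card ((X ×ˢ Y).filter fun p => G p.1 p.2) (by simp [and_assoc])]
  simp only [Finset.card_filter, Finset.sum_product]

lemma le_dens_univ [Fintype V] [Nonempty V] {d : ℝ}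
    (h : ∀ x, d * Fintype.card V ≤ outDeg G x) : d ≤ dens G Set.univ Set.univ := by
  classical
  rw [dens, Set.ncard_univ, Nat.card_eq_fintype_card, le_div_iff₀ (by positivity),
    ← Finset.coe_univ, eCount_eq_sum, Nat.cast_sum]
  calc d * (Fintype.card V * Fintype.card V) = ∑ _x : V, d * Fintype.card V := by
        rw [Finset.sum_const, Finset.card_univ, nsmul_eq_mul]; ring
    _ ≤ ∑ x, ((Finset.univ.filter (G x)).card : ℝ) :=
        Finset.sum_le_sum fun x _ => outDeg_eq_card_filter (G := G) x ▸ h x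

lemma dens_le_of_card_filter_le [DecidableRel G] {c : ℝ} (hc : 0 ≤ c) {X Y : Finset V}
    (h : ∀ x ∈ X, ((Y.filter (G x)).card : ℝ) ≤ c * Y.card) : dens G X Y ≤ c := by
  rw [dens, Set.ncard_coe_finset, Set.ncard_coe_finset, eCount_eq_sum, Nat.cast_sum]
  refine div_le_of_le_mul₀ (by positivity) hc ?_
  calc ∑ x ∈ X, ((Y.filter (G x)).card : ℝ) ≤ ∑ _x ∈ X, c * Y.card := Finset.sum_le_sum h
    _ = c * (X.card * Y.card) := by rw [Finset.sum_const, nsmul_eq_mul]; ring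

lemma SuperRegular.expanding [Fintype V] [Nonempty V] [DecidableRel G] {ε d : ℝ}
    (hG : SuperRegular G ε d) (hεd : ε ≤ d) {r q : ℕ} (hr : ε * Fintype.card V ≤ r)
    (hq : ε * Fintype.card V ≤ q) (hrq : r ≤ (d - ε) * q) : Expanding G r q := by
  intro X Y hX hY
  by_contra! hle
  have hdens : dens G X Y ≤ d - ε := dens_le_of_card_filter_le (sub_nonneg.2 hεd) fun x hx =>
    calc ((Y.filter (G x)).card : ℝ) ≤ r := by exact_mod_cast hle x hx
      _ ≤ (d - ε) * q := hrq
      _ ≤ (d - ε) * Y.card := by gcongr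
  have hreg := hG.1 X Y (by rw [Set.ncard_coe_finset]; exact hr.trans (by exact_mod_cast hX))
    (by rw [Set.ncard_coe_finset]; exact hq.trans (by exact_mod_cast hY))
  linarith [(abs_lt.1 hreg).1, le_dens_univ fun x => (hG.2 x).1]

lemma SuperRegular.le_one [Fintype V] [Nonempty V] {ε d : ℝ} (hG : SuperRegular G ε d) : d ≤ 1 := by
  have x := Classical.arbitrary V
  have hcard : (0 : ℝ) < Fintype.card V := by positivity
  have hdeg : (outDeg G x : ℝ) ≤ Fintype.card V := by
    exact_mod_cast (Finite.card_subtype_le (G x)).trans_eq Nat.card_eq_fintype_card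
  exact le_of_mul_le_mul_right (by linarith [(hG.2 x).1]) hcard

end Density

theorem super_regular_hamilton_general {V : Type*} [Fintype V] {G : V → V → Prop} {ε d : ℝ}
    (hd : 0 < d) (hε : ε ≤ d ^ 2 / 12) (hn : 12 ≤ d ^ 2 * Fintype.card V)
    (hG : SuperRegular G ε d) : ∃ f : ZMod (Fintype.card V) → V, IsHamCycle G f := by
  classical
  have : Nonempty V := Fintype.card_pos_iff.1 <| Nat.pos_of_ne_zero fun h => by norm_num [h] at hn
  set n : ℝ := (Fintype.card V : ℝ)
  have hd2 : d ^ 2 ≤ d := by nlinarith [hG.le_one]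
  have hd2n : d ^ 2 * n ≤ d * n := by gcongr
  have hr := Nat.le_ceil (d ^ 2 * n / 12)
  have hr' := Nat.ceil_lt_add_one (a := d ^ 2 * n / 12) (by positivity)
  have hq := Nat.le_ceil (d * n / 3)
  have hq' := Nat.ceil_lt_add_one (a := d * n / 3) (by positivity)
  have hD := Nat.le_ceil (d * n)
  have hεn : ε * n ≤ d ^ 2 * n / 12 :=
    calc ε * n ≤ d ^ 2 / 12 * n := by gcongr
      _ = d ^ 2 * n / 12 := by ring
  set r := ⌈d ^ 2 * n / 12⌉₊
  set q := ⌈d * n / 3⌉₊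
  have hrq : r ≤ (d - ε) * q :=
    calc (r : ℝ) ≤ d / 2 * (d * n / 3) := by linarith
      _ ≤ (d - ε) * q := by gcongr <;> linarith
  exact (hG.expanding (by linarith) (hεn.trans hr) (by linarith) hrq).exists_isHamCycle
    (D := ⌈d * n⌉₊) (by exact_mod_cast (by linarith : (2 * q : ℝ) < ⌈d * n⌉₊))
    (by exact_mod_cast (by linarith : (q + 3 * r : ℝ) < ⌈d * n⌉₊))
    (fun x => Nat.ceil_le.2 (outDeg_eq_card_filter (G := G) x ▸ (hG.2 x).1))
    (fun x => Nat.ceil_le.2 (inDeg_eq_card_filter (G := G) x ▸ (hG.2 x).2))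

/-- For every d ∈ (0,1) there exist ε > 0 and n₀ such that every (ε, d)-super-regular
digraph on n ≥ n₀ vertices contains a Hamilton cycle. -/
theorem super_regular_hamilton (d : ℝ) (hd0 : 0 < d) (hd1 : d < 1) :
    ∃ ε : ℝ, 0 < ε ∧
      ∃ n₀ : ℕ, ∀ (V : Type) [Fintype V] (G : V → V → Prop),
        Irreflexive G →
        n₀ ≤ Fintype.card V →
        SuperRegular G ε d →
        ∃ f : ZMod (Fintype.card V) → V, IsHamCycle G f := by
  refine ⟨d ^ 2 / 12, by positivity, ⌈12 / d ^ 2⌉₊, fun V _ G _ hn hG => ?_⟩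
  exact super_regular_hamilton_general hd0 le_rfl
    ((div_le_iff₀' (by positivity)).1 (Nat.ceil_le.1 hn)) hG
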